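/- arXiv:2103.04304 — 5 statements merged into one kernel-verified Lean document; each statement's English description precedes it below -/
import Mathlib

section
/- For every additive valuation v over a finite set M of indivisible goods, the AnyPrice share at entitlement 1/2 equals the maximin share for two agents: APS(1/2, v, M) = MMS_2(v, M). -/
open Finset

def IsPartition {ι : Type*} [DecidableEq ι] (M : Finset ι) {n : ℕ} (A : Fin n → Finset ι) : Prop :=
  (∀ i, A i ⊆ M) ∧ (∀ i j, i ≠ j → Disjoint (A i) (A j)) ∧ ∀ x ∈ M, ∃ i, x ∈ A i

/-- The AnyPrice share (price-based definition): the minimum over all nonnegative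
price vectors summing to 1 of the best value of an affordable bundle. -/
noncomputable def APS {ι : Type*} (b : ℝ) (v : Finset ι → ℝ) (M : Finset ι) : ℝ :=
  sInf {t : ℝ | ∃ p : ι → ℝ, (∀ j ∈ M, 0 ≤ p j) ∧ (∑ j ∈ M, p j) = 1 ∧
    t = sSup {u : ℝ | ∃ S, S ⊆ M ∧ (∑ j ∈ S, p j) ≤ b ∧ u = v S}}

/-- The maximin share for `n` agents: the maximum over partitions of `M` into `n`
bundles of the minimum bundle value. -/
noncomputable def MMS {ι : Type*} [DecidableEq ι] (n : ℕ) (v : Finset ι → ℝ) (M : Finset ι) : ℝ :=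
  sSup {t : ℝ | ∃ A : Fin n → Finset ι, IsPartition M A ∧ ∀ i, t ≤ v (A i)}

/-!
For `MMS ≤ APS`, whatever the prices, one of the two bundles of a partition costs at most half of
the total. For `APS ≤ MMS`, take prices proportional to the values: a bundle `S` costing at most
half is then worth at most half of `M`, so `S` is the worse bundle of the partition `{S, M \ S}`.
-/

section Partition

variable {ι : Type*} [DecidableEq ι] {M : Finset ι} {n : ℕ}

lemma isPartition_pair_sdiff {S : Finset ι} (hS : S ⊆ M) : IsPartition M ![S, M \ S] := by
  refine ⟨?_, ?_, fun x hx => ?_⟩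
  · simp [Fin.forall_fin_two, hS]
  · simp [Fin.forall_fin_two, disjoint_sdiff, sdiff_disjoint]
  · simp [Fin.exists_fin_two, hx, em]

lemma exists_isPartition (M : Finset ι) (n : ℕ) [NeZero n] :
    ∃ A : Fin n → Finset ι, IsPartition M A := by
  refine ⟨fun i => if i = 0 then M else ∅, fun i => ?_, fun i j hij => ?_, fun x hx => ⟨0, ?_⟩⟩
  · by_cases hi : i = 0 <;> simp [hi]
  · by_cases hi : i = 0
    · simp [show j ≠ 0 from fun hj => hij (hi.trans hj.symm)]
    · simp [hi]
  · simpa using hx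

lemma IsPartition.biUnion_eq {A : Fin n → Finset ι} (hA : IsPartition M A) :
    univ.biUnion A = M := by
  refine Subset.antisymm (biUnion_subset.2 fun i _ => hA.1 i) fun x hx => ?_
  simpa using hA.2.2 x hx

lemma IsPartition.sum_sum_eq {A : Fin n → Finset ι} (hA : IsPartition M A) (f : ι → ℝ) :
    ∑ i, ∑ j ∈ A i, f j = ∑ j ∈ M, f j := by
  rw [← hA.biUnion_eq, sum_biUnion fun i _ j _ hij => hA.2.1 i j hij]

end Partition

lemma exists_forall_subset_le {ι : Type*} (v : Finset ι → ℝ) (M : Finset ι) :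
    ∃ B, ∀ S ⊆ M, v S ≤ B := by
  obtain ⟨B, hB⟩ := (M.powerset.image v).exists_le
  exact ⟨B, fun S hS => hB _ (mem_image_of_mem v (mem_powerset.2 hS))⟩

section MaximinShare

variable {ι : Type*} [DecidableEq ι] {M : Finset ι} {v : Finset ι → ℝ} {n : ℕ} [NeZero n] {a : ℝ}

lemma le_mms {A : Fin n → Finset ι} (hA : IsPartition M A) (ha : ∀ i, a ≤ v (A i)) :
    a ≤ MMS n v M := by
  obtain ⟨B, hB⟩ := exists_forall_subset_le v M
  refine le_csSup ⟨B, ?_⟩ ⟨A, hA, ha⟩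
  rintro t ⟨A', hA', ht⟩
  exact (ht 0).trans (hB _ (hA'.1 0))

lemma mms_le (h : ∀ A : Fin n → Finset ι, IsPartition M A → ∃ i, v (A i) ≤ a) :
    MMS n v M ≤ a := by
  obtain ⟨A₀, hA₀⟩ := exists_isPartition M n
  obtain ⟨t₀, ht₀⟩ := Finite.exists_ge fun i => v (A₀ i)
  refine csSup_le ⟨t₀, A₀, hA₀, ht₀⟩ ?_
  rintro t ⟨A, hA, ht⟩
  obtain ⟨i, hi⟩ := h A hA
  exact (ht i).trans hi

lemma mms_empty (v : Finset ι → ℝ) (n : ℕ) [NeZero n] : MMS n v ∅ = v ∅ := by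
  have bundle_eq {A : Fin n → Finset ι} (hA : IsPartition ∅ A) (i : Fin n) : A i = ∅ :=
    subset_empty.1 (hA.1 i)
  obtain ⟨A, hA⟩ := exists_isPartition (∅ : Finset ι) n
  exact le_antisymm (mms_le fun A' hA' => ⟨0, by rw [bundle_eq hA']⟩)
    (le_mms hA fun i => by rw [bundle_eq hA])

end MaximinShare

/-- A price vector on the goods `M`: nonnegative prices of total `1`. Values of `p` outside `M` are
unconstrained. -/
structure IsPriceVector {ι : Type*} (M : Finset ι) (p : ι → ℝ) : Prop where
  nonneg : ∀ j ∈ M, 0 ≤ p j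
  sum_eq_one : ∑ j ∈ M, p j = 1

/-- The best value of a bundle of `M` that budget `b` affords at prices `p`, i.e. the quantity that
`APS` minimizes over price vectors. For `b < 0` no bundle is affordable and it is the junk value
`sSup ∅ = 0`. -/
noncomputable def affordableValue {ι : Type*} (b : ℝ) (v : Finset ι → ℝ) (M : Finset ι)
    (p : ι → ℝ) : ℝ :=
  sSup {u : ℝ | ∃ S, S ⊆ M ∧ (∑ j ∈ S, p j) ≤ b ∧ u = v S}

section AnyPriceShare

variable {ι : Type*} {M : Finset ι} {v : Finset ι → ℝ} {p w : ι → ℝ} {a b : ℝ}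

lemma exists_isPriceVector (hM : M.Nonempty) : ∃ p : ι → ℝ, IsPriceVector M p := by
  refine ⟨fun _ => (#M : ℝ)⁻¹, fun _ _ => by positivity, ?_⟩
  have hcard : (#M : ℝ) ≠ 0 := Nat.cast_ne_zero.2 hM.card_ne_zero
  rw [sum_const, nsmul_eq_mul, mul_inv_cancel₀ hcard]

lemma exists_isPriceVector_proportional (hM : M.Nonempty) (hw : ∀ j ∈ M, 0 ≤ w j) :
    ∃ p, IsPriceVector M p ∧ ∀ j ∈ M, w j = (∑ k ∈ M, w k) * p j := by
  rcases (sum_nonneg hw).eq_or_lt with htotal | htotal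
  · obtain ⟨p, hp⟩ := exists_isPriceVector hM
    refine ⟨p, hp, fun j hj => ?_⟩
    rw [← htotal, zero_mul, (sum_eq_zero_iff_of_nonneg hw).1 htotal.symm j hj]
  · refine ⟨fun j => w j / ∑ k ∈ M, w k, ⟨fun j hj => div_nonneg (hw j hj) htotal.le, ?_⟩,
      fun j _ => (mul_div_cancel₀ _ htotal.ne').symm⟩
    rw [← sum_div, div_self htotal.ne']

lemma le_affordableValue {S : Finset ι} (hS : S ⊆ M) (hcost : ∑ j ∈ S, p j ≤ b) :
    v S ≤ affordableValue b v M p := by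
  obtain ⟨B, hB⟩ := exists_forall_subset_le v M
  refine le_csSup ⟨B, ?_⟩ ⟨S, hS, hcost, rfl⟩
  rintro u ⟨T, hT, -, rfl⟩
  exact hB T hT

lemma affordableValue_le (hb : 0 ≤ b) (h : ∀ S ⊆ M, ∑ j ∈ S, p j ≤ b → v S ≤ a) :
    affordableValue b v M p ≤ a := by
  refine csSup_le ⟨v ∅, ∅, empty_subset M, by rwa [sum_empty], rfl⟩ ?_
  rintro u ⟨S, hS, hcost, rfl⟩
  exact h S hS hcost

lemma aps_le_affordableValue (hb : 0 ≤ b) (hp : IsPriceVector M p) :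
    APS b v M ≤ affordableValue b v M p := by
  refine csInf_le ⟨v ∅, ?_⟩ ⟨p, hp.nonneg, hp.sum_eq_one, rfl⟩
  rintro t ⟨q, -, -, rfl⟩
  exact le_affordableValue (empty_subset M) (by rwa [sum_empty])

lemma le_aps (hM : M.Nonempty) (h : ∀ p, IsPriceVector M p → a ≤ affordableValue b v M p) :
    a ≤ APS b v M := by
  obtain ⟨p₀, hp₀⟩ := exists_isPriceVector hM
  refine le_csInf ⟨_, p₀, hp₀.nonneg, hp₀.sum_eq_one, rfl⟩ ?_
  rintro t ⟨p, hp_nonneg, hp_sum, rfl⟩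
  exact h p ⟨hp_nonneg, hp_sum⟩

-- No price vector exists on `∅`, so this is the junk value `sInf ∅ = 0`.
lemma aps_empty (b : ℝ) (v : Finset ι → ℝ) : APS b v ∅ = 0 := by
  simp [APS]

end AnyPriceShare

section Comparison

variable {ι : Type*} [DecidableEq ι] {M : Finset ι}

lemma IsPartition.exists_sum_le {n : ℕ} [NeZero n] {A : Fin n → Finset ι} (hA : IsPartition M A)
    {f : ι → ℝ} {b : ℝ} (hb : ∑ j ∈ M, f j ≤ n * b) : ∃ i, ∑ j ∈ A i, f j ≤ b := by
  have hsum : ∑ i, ∑ j ∈ A i, f j ≤ ∑ _i : Fin n, b := by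
    simpa [hA.sum_sum_eq] using hb
  obtain ⟨i, -, hi⟩ := exists_le_of_sum_le univ_nonempty hsum
  exact ⟨i, hi⟩

lemma mms_le_aps (hM : M.Nonempty) (v : Finset ι → ℝ) {n : ℕ} [NeZero n] {b : ℝ}
    (hb : 1 ≤ n * b) : MMS n v M ≤ APS b v M := by
  refine le_aps hM fun p hp => mms_le fun A hA => ?_
  obtain ⟨i, hi⟩ := hA.exists_sum_le (hp.sum_eq_one.trans_le hb)
  exact ⟨i, le_affordableValue (hA.1 i) hi⟩

lemma sum_le_mms_two {w : ι → ℝ} {S : Finset ι} (hS : S ⊆ M)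
    (hhalf : ∑ j ∈ S, w j ≤ (∑ j ∈ M, w j) / 2) :
    ∑ j ∈ S, w j ≤ MMS 2 (fun T => ∑ j ∈ T, w j) M := by
  have hsplit : ∑ j ∈ M \ S, w j + ∑ j ∈ S, w j = ∑ j ∈ M, w j := sum_sdiff hS
  have hcompl : ∑ j ∈ S, w j ≤ ∑ j ∈ M \ S, w j := by linarith
  exact le_mms (isPartition_pair_sdiff hS) (Fin.forall_fin_two.2 ⟨le_rfl, hcompl⟩)

lemma aps_half_le_mms_two (hM : M.Nonempty) {w : ι → ℝ} (hw : ∀ j ∈ M, 0 ≤ w j) :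
    APS (1 / 2) (fun S => ∑ j ∈ S, w j) M ≤ MMS 2 (fun S => ∑ j ∈ S, w j) M := by
  obtain ⟨p, hp, hprop⟩ := exists_isPriceVector_proportional hM hw
  refine (aps_le_affordableValue one_half_pos.le hp).trans
    (affordableValue_le one_half_pos.le fun S hS hcost => sum_le_mms_two hS ?_)
  calc ∑ j ∈ S, w j = (∑ k ∈ M, w k) * ∑ j ∈ S, p j := by
        rw [mul_sum]; exact sum_congr rfl fun j hj => hprop j (hS hj)
    _ ≤ (∑ k ∈ M, w k) * (1 / 2) := mul_le_mul_of_nonneg_left hcost (sum_nonneg hw)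
    _ = (∑ k ∈ M, w k) / 2 := mul_one_div _ _

end Comparison

/-- For every additive valuation, the AnyPrice share at entitlement `1/2` equals the
maximin share for two agents. -/
theorem aps_half_eq_mms_two {ι : Type*} [DecidableEq ι] (M : Finset ι)
    (w : ι → ℝ) (hw : ∀ j ∈ M, 0 ≤ w j) :
    APS (1 / 2) (fun S => ∑ j ∈ S, w j) M = MMS 2 (fun S => ∑ j ∈ S, w j) M := by
  rcases M.eq_empty_or_nonempty with rfl | hM
  · rw [aps_empty, mms_empty, sum_empty]
  · exact le_antisymm (aps_half_le_mms_two hM hw) (mms_le_aps hM _ (by norm_num))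
end

section
/- For every additive valuation v over a finite set M of indivisible goods and every entitlement b with 0 < b ≤ 1, the Truncated Proportional Share is at least the AnyPrice share: TPS(b, v, M) ≥ APS(b, v, M). -/
open Finset

/-- The truncated proportional share of an additive valuation with item values `w`:
the largest `z ≥ 0` with `b * ∑_{j ∈ M} min (w j) z = z`. -/
noncomputable def TPS {ι : Type*} (b : ℝ) (w : ι → ℝ) (M : Finset ι) : ℝ :=
  sSup {z : ℝ | 0 ≤ z ∧ b * ∑ j ∈ M, min (w j) z = z}

/-!
Fix `x > TPS` and price each item proportionally to its value truncated at `x`. A bundle `S`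
affordable at these prices has truncated value at most `b * ∑ j ∈ M, min (w j) x`, and this is less
than `x`, because `TPS` dominates every `z ≥ 0` with `z ≤ b * ∑ j ∈ M, min (w j) z`. An item worth
`x` or more would contribute `x` to the truncated value, so `S` contains none, and its true value is
its truncated value. Hence `APS ≤ x`. Prices truncated at `TPS` itself would not do: they may let
the agent afford an item worth more than `TPS`.
-/

section

variable {ι : Type*} {M : Finset ι} {b x : ℝ}

section AnyPriceShare

variable {v : Finset ι → ℝ}

theorem bddAbove_affordable_values (b : ℝ) (v : Finset ι → ℝ) (M : Finset ι) (p : ι → ℝ) :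
    BddAbove {u : ℝ | ∃ S, S ⊆ M ∧ ∑ j ∈ S, p j ≤ b ∧ u = v S} := by
  refine (M.powerset.finite_toSet.image v).bddAbove.mono ?_
  rintro _ ⟨S, hSM, -, rfl⟩
  exact Set.mem_image_of_mem v (mem_powerset.2 hSM)

theorem APS_le_of_prices (hb : 0 ≤ b) {p : ι → ℝ} (hp : ∀ j ∈ M, 0 ≤ p j)
    (hp_sum : ∑ j ∈ M, p j = 1) (hx : ∀ S ⊆ M, ∑ j ∈ S, p j ≤ b → v S ≤ x) :
    APS b v M ≤ x := by
  have empty_affordable (q : ι → ℝ) :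
      v ∅ ∈ {u : ℝ | ∃ S, S ⊆ M ∧ ∑ j ∈ S, q j ≤ b ∧ u = v S} :=
    ⟨∅, empty_subset M, by simpa only [sum_empty] using hb, rfl⟩
  refine csInf_le_of_le ⟨v ∅, ?_⟩ ⟨p, hp, hp_sum, rfl⟩ (csSup_le ⟨v ∅, empty_affordable p⟩ ?_)
  · rintro _ ⟨q, -, -, rfl⟩
    exact le_csSup (bddAbove_affordable_values b v M q) (empty_affordable q)
  · rintro _ ⟨S, hSM, hSb, rfl⟩
    exact hx S hSM hSb

theorem APS_le_of_forall_subset_le (hb : 0 ≤ b) (hx₀ : 0 ≤ x) (hx : ∀ S ⊆ M, v S ≤ x) :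
    APS b v M ≤ x := by
  by_cases h : ∃ p : ι → ℝ, (∀ j ∈ M, 0 ≤ p j) ∧ ∑ j ∈ M, p j = 1
  · obtain ⟨p, hp, hp_sum⟩ := h
    exact APS_le_of_prices hb hp hp_sum fun S hSM _ => hx S hSM
  · -- Without items there are no price vectors, and `APS` is the junk value `sInf ∅ = 0`.
    refine (Real.sInf_nonpos ?_).trans hx₀
    rintro _ ⟨p, hp, hp_sum, -⟩
    exact absurd ⟨p, hp, hp_sum⟩ h

theorem APS_le_of_unnormalized_prices (hb : 0 ≤ b) (hx₀ : 0 ≤ x) {q : ι → ℝ}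
    (hq : ∀ j ∈ M, 0 ≤ q j) (hx : ∀ S ⊆ M, ∑ j ∈ S, q j ≤ b * ∑ j ∈ M, q j → v S ≤ x) :
    APS b v M ≤ x := by
  rcases (sum_nonneg hq).eq_or_lt with h_zero | h_pos
  · refine APS_le_of_forall_subset_le hb hx₀ fun S hSM => hx S hSM ?_
    calc ∑ j ∈ S, q j ≤ ∑ j ∈ M, q j := sum_le_sum_of_subset_of_nonneg hSM fun j hj _ => hq j hj
      _ = b * ∑ j ∈ M, q j := by rw [← h_zero, mul_zero]
  · refine APS_le_of_prices (p := fun j => q j / ∑ i ∈ M, q i) hb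
      (fun j hj => div_nonneg (hq j hj) h_pos.le) ?_ fun S hSM hSb => hx S hSM ?_
    · rw [← sum_div, div_self h_pos.ne']
    · rwa [← sum_div, div_le_iff₀ h_pos] at hSb

end AnyPriceShare

section TruncatedProportionalShare

variable {w : ι → ℝ}

theorem TPS_nonneg (b : ℝ) (w : ι → ℝ) (M : Finset ι) : 0 ≤ TPS b w M :=
  Real.sSup_nonneg fun _ hz => hz.1

theorem mul_sum_min_le_mul_sum (hb : 0 ≤ b) (w : ι → ℝ) (M : Finset ι) (z : ℝ) :
    b * ∑ j ∈ M, min (w j) z ≤ b * ∑ j ∈ M, w j :=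
  mul_le_mul_of_nonneg_left (sum_le_sum fun j _ => min_le_left (w j) z) hb

theorem le_TPS_of_mul_sum_min_eq (hb : 0 ≤ b) (hx₀ : 0 ≤ x) (hx : b * ∑ j ∈ M, min (w j) x = x) :
    x ≤ TPS b w M := by
  refine le_csSup ⟨b * ∑ j ∈ M, w j, ?_⟩ ⟨hx₀, hx⟩
  rintro z ⟨-, hz⟩
  exact hz.ge.trans (mul_sum_min_le_mul_sum hb w M z)

theorem le_TPS_of_le_mul_sum_min (hb : 0 ≤ b) (hx₀ : 0 ≤ x) (hx : x ≤ b * ∑ j ∈ M, min (w j) x) :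
    x ≤ TPS b w M := by
  have h_cont : Continuous fun z => b * ∑ j ∈ M, min (w j) z := by fun_prop
  obtain ⟨z, hz, hz_fixed⟩ := exists_mem_Icc_isFixedPt h_cont.continuousOn
    (hx.trans (mul_sum_min_le_mul_sum hb w M x)) hx (mul_sum_min_le_mul_sum hb w M _)
  exact hz.1.trans (le_TPS_of_mul_sum_min_eq hb (hx₀.trans hz.1) hz_fixed)

end TruncatedProportionalShare

theorem sum_min_eq_sum_of_sum_min_lt {R : Type*} [AddCommMonoid R] [LinearOrder R]
    [IsOrderedAddMonoid R] {s : Finset ι} {f : ι → R} {a : R} (hf : ∀ j ∈ s, 0 ≤ f j)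
    (ha : 0 ≤ a) (h : ∑ j ∈ s, min (f j) a < a) : ∑ j ∈ s, min (f j) a = ∑ j ∈ s, f j := by
  refine sum_congr rfl fun j hj => min_eq_left (le_of_not_gt fun h_large => h.not_ge ?_)
  calc a = min (f j) a := (min_eq_right h_large.le).symm
    _ ≤ ∑ i ∈ s, min (f i) a :=
      single_le_sum (f := fun i => min (f i) a) (fun i hi => le_min (hf i hi) ha) hj

theorem tps_ge_aps_general (w : ι → ℝ) (hw : ∀ j ∈ M, 0 ≤ w j) (hb : 0 ≤ b) :
    APS b (fun S => ∑ j ∈ S, w j) M ≤ TPS b w M := by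
  refine le_of_forall_gt_imp_ge_of_dense fun x hx => ?_
  have hx₀ : 0 ≤ x := (TPS_nonneg b w M).trans hx.le
  have h_budget : b * ∑ j ∈ M, min (w j) x < x :=
    lt_of_not_ge fun h => hx.not_ge (le_TPS_of_le_mul_sum_min hb hx₀ h)
  refine APS_le_of_unnormalized_prices hb hx₀ (fun j hj => le_min (hw j hj) hx₀)
    fun S hSM hS => ?_
  have h_trunc : ∑ j ∈ S, min (w j) x < x := hS.trans_lt h_budget
  calc ∑ j ∈ S, w j = ∑ j ∈ S, min (w j) x :=
        (sum_min_eq_sum_of_sum_min_lt (fun j hj => hw j (hSM hj)) hx₀ h_trunc).symm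
    _ ≤ x := h_trunc.le

end

/-- For every additive valuation and entitlement `0 < b ≤ 1`, the truncated
proportional share is at least the AnyPrice share. -/
theorem tps_ge_aps {ι : Type*} (M : Finset ι)
    (w : ι → ℝ) (hw : ∀ j ∈ M, 0 ≤ w j)
    (b : ℝ) (hb0 : 0 < b) (hb1 : b ≤ 1) :
    APS b (fun S => ∑ j ∈ S, w j) M ≤ TPS b w M :=
  tps_ge_aps_general w hw hb0.le
end

section
/- For every positive integer n, there exists an instance with n agents having equal entitlements 1/n and identical additive valuations such that in every allocation at least one agent receives at most an n/(2n−1) fraction of her Truncated Proportional Share. Specifically, with 2n−1 items each of value 1/(2n−1) to every agent, every agent's TPS equals 1/n, yet in every allocation some agent receives value at most 1/(2n−1). -/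
open Finset

/-!
No single item is worth more than the proportional share `1 / n`, so truncating at `1 / n` changes
nothing and the truncated proportional share is the proportional share itself. On the other hand
`2 * n - 1` items are too few to give two of them to each of `n` agents.
-/

theorem TPS_eq_mul_sum {ι : Type*} {b : ℝ} {w : ι → ℝ} {M : Finset ι} (hb : 0 ≤ b)
    (hsum : 0 ≤ ∑ j ∈ M, w j) (hle : ∀ j ∈ M, w j ≤ b * ∑ k ∈ M, w k) :
    TPS b w M = b * ∑ j ∈ M, w j := by
  refine IsGreatest.csSup_eq ⟨⟨mul_nonneg hb hsum, ?_⟩, ?_⟩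
  · rw [sum_congr rfl fun j hj => min_eq_left (hle j hj)]
  · rintro z ⟨-, hz⟩
    calc z = b * ∑ j ∈ M, min (w j) z := hz.symm
      _ ≤ b * ∑ j ∈ M, w j := by gcongr; exact min_le_left _ _

namespace IsPartition

variable {ι : Type*} [DecidableEq ι] {M : Finset ι} {n : ℕ} {A : Fin n → Finset ι}

theorem biUnion_eq_s13 (hA : IsPartition M A) : univ.biUnion A = M := by
  obtain ⟨hsub, -, hcover⟩ := hA
  refine (biUnion_subset.2 fun i _ => hsub i).antisymm fun x hx => ?_
  simpa only [mem_biUnion, mem_univ, true_and] using hcover x hx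

theorem sum_card (hA : IsPartition M A) : ∑ i, #(A i) = #M := by
  rw [← hA.biUnion_eq_s13, card_biUnion fun i _ j _ hij => hA.2.1 i j hij]

theorem exists_card_le (hA : IsPartition M A) {k : ℕ} (hM : #M < n * (k + 1)) :
    ∃ i, #(A i) ≤ k := by
  have hlt : ∑ i, #(A i) < ∑ _i : Fin n, (k + 1) := by
    simpa only [hA.sum_card, sum_const, card_univ, Fintype.card_fin, smul_eq_mul] using hM
  obtain ⟨i, -, hi⟩ := exists_lt_of_sum_lt hlt
  exact ⟨i, Nat.lt_succ_iff.1 hi⟩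

end IsPartition

/-- For every `n`, with `2n-1` identical items of value `1/(2n-1)` and `n` agents with
equal entitlements `1/n`, every agent's truncated proportional share is `1/n`, yet in
every allocation some agent gets value at most `1/(2n-1)`, i.e. an `n/(2n-1)` fraction
of her truncated proportional share. -/
theorem tps_upper_bound_equal_entitlements (n : ℕ) (hn : 0 < n) :
    TPS (1 / (n : ℝ)) (fun _ => 1 / (2 * (n : ℝ) - 1)) (Finset.range (2 * n - 1))
      = 1 / (n : ℝ) ∧
    ∀ A : Fin n → Finset ℕ, IsPartition (Finset.range (2 * n - 1)) A →
      ∃ i, (∑ _j ∈ A i, 1 / (2 * (n : ℝ) - 1)) ≤ 1 / (2 * (n : ℝ) - 1) := by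
  have hn' : (1 : ℝ) ≤ n := by exact_mod_cast hn
  have hpos : (0 : ℝ) < 2 * n - 1 := by linarith
  have htotal : ∑ _j ∈ range (2 * n - 1), 1 / (2 * (n : ℝ) - 1) = 1 := by
    have hcast : ((2 * n - 1 : ℕ) : ℝ) = 2 * n - 1 := by
      rw [Nat.cast_pred (by positivity), Nat.cast_mul, Nat.cast_ofNat]
    rw [sum_const, card_range, nsmul_eq_mul, hcast, mul_one_div_cancel hpos.ne']
  have hitem : 1 / (2 * (n : ℝ) - 1) ≤ 1 / n :=
    one_div_le_one_div_of_le (by linarith) (by linarith)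
  constructor
  · rw [TPS_eq_mul_sum, htotal, mul_one]
    · positivity
    · simp only [htotal, zero_le_one]
    · simpa only [htotal, mul_one] using fun _ _ => hitem
  · intro A hA
    obtain ⟨i, hi⟩ : ∃ i, #(A i) ≤ 1 := hA.exists_card_le (by rw [card_range]; lia)
    refine ⟨i, ?_⟩
    rw [sum_const, nsmul_eq_mul]
    exact mul_le_of_le_one_left (by positivity) (by exact_mod_cast hi)
end

section
/- There exists an instance with additive valuations and entitlements for which a competitive equilibrium (with entitlements as budgets) exists, yet no allocation gives every agent at least her Truncated Proportional Share (equivalently, her proportional share). Specifically, with two agents with entitlements b_1 = 0.4 and b_2 = 0.6 and three identical items each valued 1/3 by both agents: a competitive equilibrium exists, but in every allocation agent 1 receives value at most 1/3 < 0.4 = TPS(b_1, v_1, M). -/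
open Finset

/-- Competitive equilibrium: an allocation together with item prices such that every
agent's bundle is within her budget and is value-maximizing among affordable bundles. -/
def IsCE {ι : Type*} [DecidableEq ι] {n : ℕ} (v : Fin n → Finset ι → ℝ) (b : Fin n → ℝ)
    (M : Finset ι) (A : Fin n → Finset ι) (p : ι → ℝ) : Prop :=
  IsPartition M A ∧ (∀ j ∈ M, 0 ≤ p j) ∧
  (∀ i, ∑ j ∈ A i, p j ≤ b i) ∧
  ∀ i, ∀ S ⊆ M, (∑ j ∈ S, p j) ≤ b i → v i S ≤ v i (A i)

/-!
No item is worth more than an agent's proportional share, so truncation has no effect and the shares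
are `2/5` and `3/5`. Each exceeds the value `1/3` of a single item, so satisfying both agents would
take at least two items for each, and there are only three. At price `3/10` per item, however, agent
`1` can afford exactly one item and agent `2` exactly two, so these bundles form a competitive
equilibrium.
-/

section

variable {ι : Type*}

theorem TPS_eq_mul_sum_of_forall_le {b : ℝ} {w : ι → ℝ} {M : Finset ι}
    (hnonneg : 0 ≤ b * ∑ j ∈ M, w j) (hb : 0 ≤ b) (hw : ∀ j ∈ M, w j ≤ b * ∑ k ∈ M, w k) :
    TPS b w M = b * ∑ j ∈ M, w j := by
  refine IsGreatest.csSup_eq ⟨⟨hnonneg, ?_⟩, ?_⟩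
  · rw [sum_congr rfl fun j hj => min_eq_left (hw j hj)]
  · rintro z ⟨-, hz⟩
    calc z = b * ∑ j ∈ M, min (w j) z := hz.symm
      _ ≤ b * ∑ j ∈ M, w j := by gcongr; exact min_le_left _ _

theorem TPS_const_eq_mul_card {b c : ℝ} {M : Finset ι} (hc : 0 ≤ c) (hM : 1 ≤ b * #M) :
    TPS b (fun _ => c) M = b * (#M * c) := by
  have hb : 0 ≤ b := (pos_of_mul_pos_left (zero_lt_one.trans_le hM) (Nat.cast_nonneg _)).le
  have hsum : ∑ _j ∈ M, c = #M * c := by rw [sum_const, nsmul_eq_mul]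
  have hle : c ≤ b * ∑ _j ∈ M, c := by
    rw [hsum, ← mul_assoc]
    exact le_mul_of_one_le_left hc hM
  rw [TPS_eq_mul_sum_of_forall_le (hc.trans hle) hb fun _ _ => hle, hsum]

variable [DecidableEq ι] {n : ℕ} {M : Finset ι} {A : Fin n → Finset ι}

theorem IsPartition.sum_card_s14 (hA : IsPartition M A) : ∑ i, #(A i) = #M := by
  obtain ⟨hsub, hdisj, hcover⟩ := hA
  have hunion : univ.biUnion A = M := by
    ext x
    simp only [mem_biUnion, mem_univ, true_and]
    exact ⟨fun ⟨i, hx⟩ => hsub i hx, hcover x⟩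
  rw [← hunion, card_biUnion fun i _ j _ hij => hdisj i j hij]

theorem IsPartition.exists_sum_const_lt (hA : IsPartition M A) {c : ℝ} (hc : 0 ≤ c)
    {t : Fin n → ℝ} {k : Fin n → ℕ} (ht : ∀ i, k i * c < t i) (hk : #M < ∑ i, (k i + 1)) :
    ∃ i, ∑ _j ∈ A i, c < t i := by
  obtain ⟨i, -, hi⟩ : ∃ i ∈ univ, #(A i) < k i + 1 :=
    exists_lt_of_sum_lt (hA.sum_card_s14.trans_lt hk)
  refine ⟨i, ?_⟩
  calc ∑ _j ∈ A i, c = #(A i) * c := by rw [sum_const, nsmul_eq_mul]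
    _ ≤ k i * c := by gcongr; exact Nat.lt_succ_iff.mp hi
    _ < t i := ht i

theorem IsPartition.isCE_const_price (hA : IsPartition M A) {v : Fin n → Finset ι → ℝ}
    (hv : ∀ i S T, #S ≤ #T → v i S ≤ v i T) {b : Fin n → ℝ} {q : ℝ} (hq : 0 ≤ q)
    (hle : ∀ i, #(A i) * q ≤ b i) (hlt : ∀ i, b i < (#(A i) + 1) * q) :
    IsCE v b M A fun _ => q := by
  refine ⟨hA, fun _ _ => hq, fun i => ?_, fun i S _ hS => hv i S (A i) ?_⟩
  · rw [sum_const, nsmul_eq_mul]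
    exact hle i
  · rw [sum_const, nsmul_eq_mul] at hS
    have hcard : (#S : ℝ) < #(A i) + 1 := lt_of_mul_lt_mul_right (hS.trans_lt (hlt i)) hq
    exact Nat.lt_succ_iff.mp (mod_cast hcard)

end

/-- An instance (two agents with entitlements 2/5 and 3/5, three identical items of
value 1/3 to both) in which a competitive equilibrium exists, the truncated
proportional share of agent 1 is 2/5, yet no allocation gives every agent at least her
truncated proportional share. -/
theorem ce_exists_but_no_tps_allocation :
    (∃ (A : Fin 2 → Finset (Fin 3)) (p : Fin 3 → ℝ),
      IsCE (fun _ S => ∑ _j ∈ S, (1 : ℝ) / 3) ![2 / 5, 3 / 5] Finset.univ A p) ∧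
    TPS (2 / 5) (fun _ : Fin 3 => (1 : ℝ) / 3) Finset.univ = 2 / 5 ∧
    ∀ A : Fin 2 → Finset (Fin 3), IsPartition Finset.univ A →
      ¬ (TPS (2 / 5) (fun _ : Fin 3 => (1 : ℝ) / 3) Finset.univ ≤ ∑ _j ∈ A 0, (1 : ℝ) / 3 ∧
         TPS (3 / 5) (fun _ : Fin 3 => (1 : ℝ) / 3) Finset.univ ≤ ∑ _j ∈ A 1, (1 : ℝ) / 3) := by
  have tps_eq (b : ℝ) (hb : 1 / 3 ≤ b) : TPS b (fun _ : Fin 3 => (1 : ℝ) / 3) univ = b := by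
    have hcard : 1 ≤ b * #(univ : Finset (Fin 3)) := by
      rw [card_fin, Nat.cast_ofNat]
      linarith
    rw [TPS_const_eq_mul_card (by norm_num) hcard, card_fin]
    norm_num
  refine ⟨⟨![{0}, {1, 2}], fun _ => 3 / 10, ?_⟩, tps_eq _ (by norm_num), fun A hA => ?_⟩
  · have hpart : IsPartition univ ![({0} : Finset (Fin 3)), {1, 2}] :=
      ⟨by decide, by decide, by decide⟩
    refine hpart.isCE_const_price (fun _ S T hST => ?_) (by norm_num) ?_ ?_
    · simp only [sum_const]
      gcongr
    all_goals norm_num [Fin.forall_fin_two, card_pair (show (1 : Fin 3) ≠ 2 by decide)]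
  · rw [tps_eq _ (by norm_num), tps_eq _ (by norm_num), not_and_or, not_le, not_le]
    exact Fin.exists_fin_two.mp <|
      hA.exists_sum_const_lt (by norm_num) (t := ![2 / 5, 3 / 5]) (k := fun _ => 1)
        (by norm_num [Fin.forall_fin_two]) (by decide)
end

section
/- For any instance with n agents having additive valuations v_1,…,v_n over a finite set M of indivisible goods and entitlements b_1,…,b_n > 0 summing to 1, there exists an allocation (A_1,…,A_n) of M with the following property: for every agent i and every positive integer k, if every subset of M containing at most k items has v_i-value at most the proportional share b_i·v_i(M), then v_i(A_i) ≥ (k/(k+1))·b_i·v_i(M). -/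
open Finset

/-!
Divide each valuation by the value of `M`, so that all agents value `M` at `1`, and give agent `i`
the budget `b i`. An agent bids the value of her favourite remaining item as long as it fits into
her remaining budget. The highest bidder receives that item and pays her bid. Every other bidder
values the item at no more than the price, so each bidder keeps valuing the remaining items at no
less than the total remaining budget.

So an agent who still bids when the items run out has spent her whole budget. Any other agent at
some point finds an item `y` above what is left of her budget. The items `T` she has bought by then
are each worth at least `y` to her, and `T ∪ {y}` is worth more than her budget `c`. If no set of at
most `k` items is worth more than `c`, then `k ≤ |T|`, so `k * v y ≤ v T` and
`k * c ≤ k * (v T + v y) ≤ (k + 1) * v T`.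
-/

theorem isPartition_filter {ι : Type*} [DecidableEq ι] (M : Finset ι) {n : ℕ} (f : ι → Fin n) :
    IsPartition M fun i => {x ∈ M | f x = i} := by
  refine ⟨fun i => filter_subset _ M, fun i j hij => ?_, fun x hx => ⟨f x, by simp [hx]⟩⟩
  exact disjoint_filter.2 fun x _ hi hj => hij (hi.symm.trans hj)

theorem sum_update_sub {α K : Type*} [Fintype α] [DecidableEq α] [AddCommGroup K] (c : α → K)
    (i : α) (a : K) : ∑ l, Function.update c i (c i - a) l = ∑ l, c l - a := by
  rw [sum_update_of_mem (mem_univ i), sdiff_singleton_eq_erase, sum_erase_eq_sub (mem_univ i)]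
  abel

section UpdateFilter

variable {ι α : Type*} [DecidableEq ι] [DecidableEq α] {x : ι} {R : Finset ι} {i j : α}

theorem filter_update_eq_self (f : ι → α) (hx : x ∈ R) :
    {y ∈ R | Function.update f x i y = i} = insert x {y ∈ R.erase x | f y = i} := by
  ext y
  by_cases hy : y = x <;> simp [hy, hx]

theorem filter_update_eq_of_ne (f : ι → α) (R : Finset ι) (x : ι) (hij : i ≠ j) :
    {y ∈ R | Function.update f x i y = j} = {y ∈ R.erase x | f y = j} := by
  ext y
  by_cases hy : y = x <;> simp [hy, hij]

end UpdateFilter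

/-- The bundle `A`, bought from the items `R`, meets the budget `c`, or would have exceeded it by
one further item: some `T ⊆ A` is worth more than `c` together with an item of `R \ T` that is worth
no more than any item of `T`. This is what the bidding procedure guarantees to each agent. -/
def NearlyCovers {ι K : Type*} [AddCommMonoid K] [LinearOrder K] (v : ι → K) (R A : Finset ι)
    (c : K) : Prop :=
  c ≤ ∑ x ∈ A, v x ∨
    ∃ T ⊆ A, ∃ y ∈ R, y ∉ T ∧ (∀ t ∈ T, v y ≤ v t) ∧ c < ∑ x ∈ T, v x + v y

namespace NearlyCovers

section AddCommMonoid

variable {ι K : Type*} [AddCommMonoid K] [LinearOrder K] {v : ι → K} {R S A : Finset ι} {c : K}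

theorem of_not_forall_le (A : Finset ι) (h : ¬ ∀ y ∈ R, v y ≤ c) : NearlyCovers v R A c := by
  push Not at h
  obtain ⟨y, hy, hlt⟩ := h
  exact .inr ⟨∅, empty_subset A, y, hy, notMem_empty y, by simp, by simpa using hlt⟩

theorem mono (hRS : R ⊆ S) (h : NearlyCovers v R A c) : NearlyCovers v S A c :=
  h.imp_right fun ⟨T, hT, y, hy, hlt⟩ => ⟨T, hT, y, hRS hy, hlt⟩

theorem nsmul_le_succ_nsmul_sum [IsOrderedAddMonoid K] {k : ℕ} (h : NearlyCovers v R A c)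
    (hAR : A ⊆ R) (hc : 0 ≤ c) (hv : ∀ x ∈ R, 0 ≤ v x)
    (hk : ∀ S ⊆ R, #S ≤ k → ∑ x ∈ S, v x ≤ c) :
    k • c ≤ (k + 1) • ∑ x ∈ A, v x := by
  classical
  rcases h with hcA | ⟨T, hTA, y, hyR, hyT, hyle, hlt⟩
  · exact (nsmul_le_nsmul_left hc k.le_succ).trans (nsmul_le_nsmul_right hcA (k + 1))
  · have hk_card : k ≤ #T := by
      by_contra! hcard
      have hle := hk (insert y T) (insert_subset hyR (hTA.trans hAR))
        ((card_insert_le y T).trans hcard)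
      rw [sum_insert hyT, add_comm] at hle
      exact hle.not_gt hlt
    have hky : k • v y ≤ ∑ x ∈ T, v x :=
      (nsmul_le_nsmul_left (hv y hyR) hk_card).trans (card_nsmul_le_sum T v (v y) hyle)
    have hTA_sum : ∑ x ∈ T, v x ≤ ∑ x ∈ A, v x :=
      sum_le_sum_of_subset_of_nonneg hTA fun x hx _ => hv x (hAR hx)
    calc
      k • c ≤ k • (∑ x ∈ T, v x + v y) := nsmul_le_nsmul_right hlt.le k
      _ = k • ∑ x ∈ T, v x + k • v y := nsmul_add _ _ k
      _ ≤ k • ∑ x ∈ T, v x + ∑ x ∈ T, v x := by gcongr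
      _ = (k + 1) • ∑ x ∈ T, v x := (succ_nsmul _ k).symm
      _ ≤ (k + 1) • ∑ x ∈ A, v x := nsmul_le_nsmul_right hTA_sum (k + 1)

end AddCommMonoid

variable {ι α K : Type*} [AddCommGroup K] [LinearOrder K] [IsOrderedAddMonoid K]

theorem insert_of_sub [DecidableEq ι] {v : ι → K} {R A : Finset ι} {c : K} {x : ι} (hxA : x ∉ A)
    (hmax : ∀ y ∈ R, v y ≤ v x) (h : NearlyCovers v (R.erase x) A (c - v x)) :
    NearlyCovers v R (insert x A) c := by
  rcases h with hcA | ⟨T, hTA, y, hy, hyT, hyle, hlt⟩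
  · left
    rw [sum_insert hxA]
    exact sub_le_iff_le_add'.1 hcA
  · obtain ⟨hyx, hyR⟩ := mem_erase.1 hy
    refine .inr ⟨insert x T, insert_subset_insert x hTA, y, hyR, by simp [hyx, hyT],
      forall_mem_insert _ _ _ |>.2 ⟨hmax y hyR, hyle⟩, ?_⟩
    rw [sum_insert (notMem_mono hTA hxA), add_assoc]
    exact sub_lt_iff_lt_add'.1 hlt

theorem of_update_sub [Fintype α] [DecidableEq α] [DecidableEq ι] {v : α → ι → K}
    {c : α → K} {R : Finset ι} {f : ι → α} {i j : α} {x : ι} (hx : x ∈ R)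
    (hmax : (∀ y ∈ R, v j y ≤ c j) → ∀ y ∈ R, v j y ≤ v i x)
    (hf : ∑ l, Function.update c i (c i - v i x) l ≤ ∑ y ∈ R.erase x, v j y →
      NearlyCovers (v j) (R.erase x) {y ∈ R.erase x | f y = j}
        (Function.update c i (c i - v i x) j))
    (hsum : ∑ l, c l ≤ ∑ y ∈ R, v j y) :
    NearlyCovers (v j) R {y ∈ R | Function.update f x i y = j} (c j) := by
  by_cases hbid : ∀ y ∈ R, v j y ≤ c j
  · have hprice := hmax hbid
    have hsum' : ∑ l, Function.update c i (c i - v i x) l ≤ ∑ y ∈ R.erase x, v j y :=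
      calc
        ∑ l, Function.update c i (c i - v i x) l = ∑ l, c l - v i x :=
          sum_update_sub c i (v i x)
        _ ≤ ∑ y ∈ R, v j y - v j x := sub_le_sub hsum (hprice x hx)
        _ = ∑ y ∈ R.erase x, v j y := (sum_erase_eq_sub hx).symm
    have hcovers := hf hsum'
    rcases eq_or_ne i j with rfl | hij
    · rw [Function.update_self] at hcovers
      rw [filter_update_eq_self f hx]
      exact hcovers.insert_of_sub (by simp) hprice
    · rw [Function.update_of_ne hij.symm] at hcovers
      rw [filter_update_eq_of_ne f R x hij]
      exact hcovers.mono (erase_subset x R)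
  · exact of_not_forall_le _ hbid

end NearlyCovers

theorem exists_forall_nearlyCovers {ι α K : Type*} [AddCommGroup K] [LinearOrder K]
    [IsOrderedAddMonoid K] [Fintype α] [DecidableEq α] [Nonempty α] (v : α → ι → K) (R : Finset ι)
    (c : α → K) (hc : ∀ i, 0 ≤ c i) :
    ∃ f : ι → α, ∀ i, ∑ l, c l ≤ ∑ x ∈ R, v i x →
      NearlyCovers (v i) R {x ∈ R | f x = i} (c i) := by
  classical
  induction R using strongInduction generalizing c with | H R ih
  let bids : Finset (α × ι) := ({i | ∀ x ∈ R, v i x ≤ c i} : Finset α) ×ˢ R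
  have mem_bids (i : α) (x : ι) : (i, x) ∈ bids ↔ (∀ y ∈ R, v i y ≤ c i) ∧ x ∈ R := by simp [bids]
  rcases bids.eq_empty_or_nonempty with hbids | hbids
  · refine ⟨fun _ => Classical.arbitrary α, fun i hsum => ?_⟩
    rcases R.eq_empty_or_nonempty with rfl | ⟨x, hx⟩
    · exact .inl (by simpa using (single_le_sum (fun l _ => hc l) (mem_univ i)).trans hsum)
    · exact .of_not_forall_le _ fun hi =>
        eq_empty_iff_forall_notMem.1 hbids (i, x) ((mem_bids i x).2 ⟨hi, hx⟩)
  · obtain ⟨⟨i, x⟩, hix, hmax⟩ := exists_max_image bids (fun p => v p.1 p.2) hbids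
    obtain ⟨hi, hx⟩ := (mem_bids i x).1 hix
    have hc' : ∀ j, 0 ≤ Function.update c i (c i - v i x) j :=
      (Function.forall_update_iff c fun _ a => 0 ≤ a).2 ⟨sub_nonneg.2 (hi x hx), fun j _ => hc j⟩
    obtain ⟨f, hf⟩ := ih (R.erase x) (erase_ssubset hx) _ hc'
    exact ⟨Function.update f x i, fun j => .of_update_sub hx
      (fun hj y hy => hmax (j, y) ((mem_bids j y).2 ⟨hj, hy⟩)) (hf j)⟩

theorem proportional_fraction_allocation_general {ι α K : Type*} [Fintype α] [DecidableEq α]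
    [Nonempty α] [Field K] [LinearOrder K] [IsStrictOrderedRing K] (M : Finset ι)
    (w : α → ι → K) (b : α → K) (hw : ∀ i, ∀ j ∈ M, 0 ≤ w i j) (hb : ∀ i, 0 ≤ b i)
    (hbsum : ∑ i, b i ≤ 1) :
    ∃ f : ι → α, ∀ i, ∀ k : ℕ,
      (∀ S ⊆ M, #S ≤ k → ∑ j ∈ S, w i j ≤ b i * ∑ j ∈ M, w i j) →
      (k : K) / (k + 1) * (b i * ∑ j ∈ M, w i j) ≤ ∑ j ∈ M with f j = i, w i j := by
  obtain ⟨f, hf⟩ := exists_forall_nearlyCovers (fun i j => w i j / ∑ l ∈ M, w i l) M b hb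
  refine ⟨f, fun i k hk => ?_⟩
  rcases (sum_nonneg (hw i)).eq_or_lt with hM | hM
  · rw [← hM, mul_zero, mul_zero]
    exact sum_nonneg fun j hj => hw i j (mem_of_mem_filter j hj)
  have hcovers := hf i (by rwa [← sum_div, div_self hM.ne'])
  have hshare : k • b i ≤ (k + 1) • ∑ j ∈ M with f j = i, w i j / ∑ l ∈ M, w i l := by
    refine hcovers.nsmul_le_succ_nsmul_sum (filter_subset _ M) (hb i)
      (fun j hj => div_nonneg (hw i j hj) hM.le) fun S hS hcard => ?_
    rw [← sum_div, div_le_iff₀ hM]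
    exact hk S hS hcard
  rw [← sum_div, nsmul_eq_mul, nsmul_eq_mul, mul_div_assoc', le_div_iff₀ hM] at hshare
  rw [div_mul_eq_mul_div, div_le_iff₀' (by positivity), ← mul_assoc]
  exact_mod_cast hshare

/-- For `n` agents with additive valuations and arbitrary entitlements summing to 1,
there is an allocation such that for every agent `i` and every positive integer `k`:
if no subset of at most `k` items has value exceeding the proportional share
`bᵢ·vᵢ(M)`, then agent `i` receives at least a `k/(k+1)` fraction of her proportional
share. -/
theorem proportional_fraction_allocation {ι : Type*} [DecidableEq ι] (n : ℕ)
    (M : Finset ι) (w : Fin n → ι → ℝ) (b : Fin n → ℝ)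
    (hw : ∀ i, ∀ j ∈ M, 0 ≤ w i j)
    (hb : ∀ i, 0 < b i) (hbsum : ∑ i, b i = 1) :
    ∃ A : Fin n → Finset ι, IsPartition M A ∧
      ∀ i, ∀ k : ℕ, 0 < k →
        (∀ S ⊆ M, S.card ≤ k → (∑ j ∈ S, w i j) ≤ b i * ∑ j ∈ M, w i j) →
        ((k : ℝ) / ((k : ℝ) + 1)) * (b i * ∑ j ∈ M, w i j) ≤ ∑ j ∈ A i, w i j := by
  have : Nonempty (Fin n) :=
    univ_nonempty_iff.1 (nonempty_of_sum_ne_zero (hbsum.trans_ne one_ne_zero))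
  obtain ⟨f, hf⟩ := proportional_fraction_allocation_general M w b hw (fun i => (hb i).le) hbsum.le
  exact ⟨_, isPartition_filter M f, fun i k _ => hf i k⟩
end
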